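/- Let σ, B₀, B₁ > 0 and let n, m be positive integers with m < 1/B₁. For every z ∈ {0,1}^{n+1}, let f^{(z)} : ℝ^m → ℝ^m be continuously differentiable with |f^{(z)}_i(w)| ≤ B₀ for all i ∈ [m] and w ∈ ℝ^m, and |∂f^{(z)}_i/∂w_j(w)| ≤ B₁ for all i, j ∈ [m] and w ∈ ℝ^m. Let W₀ ~ N(0, σ I_m), let Z be uniform on {0,1}^{n+1} independent of W₀, and let X be uniform on {0,1}^n independent of W₀. Let P⋆ be the law of W₀ + f^{(Z)}(W₀), and for each s ⊆ [n] let P⋆_s be the law of W₀ + f^{(X, p_s(X))}(W₀). Then 2^{−n} Σ_{s⊆[n]} ‖P⋆ − P⋆_s‖₁ ≤ 2^{−n/2} · e^{2m B₀/√(2πσ)} / (1 − m B₁). -/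

import Mathlib

/-!
Write `P_z` for the law of `W₀ + f^{(z)}(W₀)`. All the `P_z` are dominated by a single finite measure
`Λ`, of total mass at most `e^{2 m B₀ / √(2 π σ)} / (1 - m B₁)` (`map_gaussPi_le`,
`lintegral_prod_envelope_le`). Indeed `T = id + f^{(z)}` is injective because `f^{(z)}` is a strict
contraction for the sup norm, its Jacobian is at least `1 - m B₁` (`one_sub_le_det`), and `T` moves
each coordinate by at most `B₀`, so the density of `P_z` at `y` is at most `(1 - m B₁)⁻¹` times the
product over `i` of an envelope of the one-dimensional Gaussian density `φ` over the window
`[y i - B₀, y i + B₀]`. The envelope has integral at most `1 + 2 B₀ φ(0)`, whose `m`-th power is at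
most `e^{2 m B₀ φ(0)}`.

With `h_z ∈ [0, 1]` the density of `P_z` with respect to `Λ` and `g_x = (h_{(x,0)} - h_{(x,1)}) / 2`,
the density of `P⋆_s - P⋆` is the Fourier coefficient `2^{-n} ∑_x (-1)^{p_s(x)} g_x`. Parseval and
Cauchy–Schwarz bound the average over `s` of its absolute value by `2^{-n/2} / 2` at every point, and
integrating against `Λ` gives the claim (`sum_l1Dist_le`).
-/

open Finset MeasureTheory ProbabilityTheory
open scoped ENNReal

/-- The parity function indexed by `s ⊆ [n]` on `{0,1}^n` (encoded by `Bool`):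
`p_s(x) = ⊕_{i∈s} x_i`. -/
def parity {n : ℕ} (s : Finset (Fin n)) (x : Fin n → Bool) : Bool :=
  decide (Odd (s.filter fun i => x i = true).card)

/-- The Gaussian measure `N(μ, v·I_m)` on `ℝ^m` (each coordinate has variance `v`). -/
noncomputable def gaussPi (m : ℕ) (μ : Fin m → ℝ) (v : ℝ) : Measure (Fin m → ℝ) :=
  Measure.pi fun i => gaussianReal (μ i) v.toNNReal

/-- Twice the total variation distance between two measures, i.e. the `L¹` distance
between their densities when they exist. -/
noncomputable def l1Dist {E : Type*} [MeasurableSpace E] (P Q : Measure E) : ℝ :=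
  2 * ⨆ A : {s : Set E // MeasurableSet s}, |(P A.1).toReal - (Q A.1).toReal|

/-! ### Determinants of perturbed identities -/

/-- A perturbation of the identity with entries of size at most `ε` has determinant at least
`1 - m ε`. Induction on `m`: the Schur complement of the pivot `d ≥ 1 - ε` is again a perturbed
identity, with entries at most `ε + ε² / (1 - ε) = ε / (1 - ε)`, and
`(1 - ε) (1 - m ε / (1 - ε)) = 1 - (m + 1) ε`. -/
theorem one_sub_le_det (m : ℕ) : ∀ (ε : ℝ) (A : Matrix (Fin m) (Fin m) ℝ), 0 ≤ ε → m * ε < 1 →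
    (∀ i j, |A i j| ≤ ε) → 1 - m * ε ≤ (1 + A).det := by
  induction m with
  | zero => intro ε A _ _ _; simp
  | succ m ih =>
    intro ε A hε hm hA
    push_cast at hm ⊢
    have hm0 : (0 : ℝ) ≤ m * ε := by positivity
    have hε1 : 0 < 1 - ε := by linarith
    have hd := abs_le.1 (hA 0 0)
    have hd0 : 1 - ε ≤ 1 + A 0 0 := by linarith
    set d := 1 + A 0 0 with hddef
    have hdpos : 0 < d := by linarith
    -- the perturbation of the identity in the Schur complement of the `(0,0)` entry
    let A' : Matrix (Fin m) (Fin m) ℝ :=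
      Matrix.of fun i j => A i.succ j.succ - A i.succ 0 * A 0 j.succ / d
    have hdet : (1 + A).det = d * (1 + A').det := by
      let e : Fin m ⊕ Unit ≃ Fin (m + 1) :=
        ((finSuccEquiv m).trans (Equiv.optionEquivSumPUnit (Fin m))).symm
      have el : ∀ i, e (Sum.inl i) = i.succ := fun i => by simp [e]
      have er : ∀ u, e (Sum.inr u) = 0 := fun u => by simp [e]
      let D : Matrix Unit Unit ℝ := Matrix.of fun _ _ => d
      let D' : Matrix Unit Unit ℝ := Matrix.of fun _ _ => d⁻¹
      have hD : D * D' = 1 := by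
        ext i j; simp [D, D', Matrix.mul_apply, hdpos.ne']
      let : Invertible D := ⟨D', mul_eq_one_comm.1 hD, hD⟩
      have hinv : ⅟D = D' := invOf_eq_right_inv hD
      have hb : (1 + A).submatrix e e = Matrix.fromBlocks
          ((1 + A).submatrix Fin.succ Fin.succ) (Matrix.of fun i _ => A i.succ 0)
          (Matrix.of fun _ j => A 0 j.succ) D := by
        ext i j
        rcases i with i | i <;> rcases j with j | j <;>
          simp [el, er, D, hddef, Matrix.one_apply, Fin.succ_ne_zero, (Fin.succ_ne_zero _).symm]
      rw [← Matrix.det_submatrix_equiv_self e, hb, Matrix.det_fromBlocks₂₂, hinv]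
      congr 1
      · simp [D]
      · congr 1
        ext i j
        simp [A', D', Matrix.mul_apply, Matrix.one_apply]
        ring
    have hA' : ∀ i j, |A' i j| ≤ ε / (1 - ε) := by
      intro i j
      have h1 : |A i.succ 0 * A 0 j.succ / d| ≤ ε * ε / (1 - ε) := by
        rw [abs_div, abs_mul, abs_of_pos hdpos]
        gcongr
        · exact hA _ _
        · exact hA _ _
      calc |A' i j| ≤ |A i.succ j.succ| + |A i.succ 0 * A 0 j.succ / d| := abs_sub _ _
        _ ≤ ε + ε * ε / (1 - ε) := add_le_add (hA _ _) h1
        _ = ε / (1 - ε) := by field_simp; ring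
    have hlt : m * (ε / (1 - ε)) < 1 := by
      rw [← mul_div_assoc, div_lt_one hε1]; linarith
    have := ih (ε / (1 - ε)) A' (by positivity) hlt hA'
    rw [hdet]
    calc 1 - (m + 1) * ε = (1 - ε) * (1 - m * (ε / (1 - ε))) := by field_simp; ring
      _ ≤ d * (1 + A').det := mul_le_mul hd0 this (by linarith) hdpos.le

/-! ### The Gaussian density and its envelope -/

theorem lintegral_pi_prod {m : ℕ} (q : Fin m → ℝ → ℝ≥0∞) (hq : ∀ i, Measurable (q i)) :
    ∫⁻ y : Fin m → ℝ, ∏ i, q i (y i) = ∏ i, ∫⁻ t, q i t := by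
  induction m with
  | zero => simp [volume_pi]
  | succ m ih =>
    have hmp := (volume_preserving_piFinSuccAbove (fun _ : Fin (m + 1) => ℝ) 0)
    rw [← hmp.symm.lintegral_comp_emb (MeasurableEquiv.measurableEmbedding _)]
    rw [Measure.volume_eq_prod, Fin.prod_univ_succ, ← ih _ (fun i => hq i.succ),
      ← lintegral_prod_mul (hq 0).aemeasurable]
    · simp [Fin.prod_univ_succ, MeasurableEquiv.piFinSuccAbove]
    · exact (Finset.measurable_prod _ fun i _ => (hq i.succ).comp (measurable_pi_apply i)).aemeasurable

theorem gaussPi_eq_withDensity (m : ℕ) {v : ℝ} (hv : 0 < v) :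
    gaussPi m 0 v = volume.withDensity fun w => ∏ i, gaussianPDF 0 v.toNNReal (w i) := by
  have hv' : v.toNNReal ≠ 0 := by simpa using hv
  unfold gaussPi
  refine Measure.pi_eq fun s hs => ?_
  rw [withDensity_apply _ (MeasurableSet.univ_pi hs), ← lintegral_indicator (MeasurableSet.univ_pi hs)]
  have : ∀ w : Fin m → ℝ, (Set.univ.pi s).indicator
      (fun w => ∏ i, gaussianPDF 0 v.toNNReal (w i)) w =
      ∏ i, (s i).indicator (gaussianPDF 0 v.toNNReal) (w i) := by
    intro w
    by_cases h : w ∈ Set.univ.pi s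
    · rw [Set.indicator_of_mem h]
      exact prod_congr rfl fun i _ => (Set.indicator_of_mem (h i trivial) _).symm
    · rw [Set.indicator_of_notMem h]
      simp only [Set.mem_univ_pi, not_forall] at h
      obtain ⟨i, hi⟩ := h
      exact (prod_eq_zero (mem_univ i) (Set.indicator_of_notMem hi _)).symm
  simp_rw [this]
  rw [lintegral_pi_prod _ fun i => (measurable_gaussianPDF _ _).indicator (hs i)]
  refine prod_congr rfl fun i _ => ?_
  rw [lintegral_indicator (hs i), Pi.zero_apply, gaussianReal_apply _ hv']

/-- An upper envelope of the centred Gaussian density over windows of radius `b`: the constant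
`φ(0)` on `[-b, b]`, and outside it the two tails of `φ` shifted outwards by `b`. -/
noncomputable def envelope (v b t : ℝ) : ℝ≥0∞ :=
  (Set.Icc (-b) b).indicator (fun _ => gaussianPDF 0 v.toNNReal 0) t +
    ((Set.Ioi 0).indicator (gaussianPDF 0 v.toNNReal) (t - b) +
      (Set.Iio 0).indicator (gaussianPDF 0 v.toNNReal) (t + b))

theorem measurable_envelope (v b : ℝ) : Measurable (envelope v b) := by
  unfold envelope
  have := measurable_gaussianPDF 0 v.toNNReal
  refine (measurable_const.indicator measurableSet_Icc).add (Measurable.add ?_ ?_)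
  · exact (this.indicator measurableSet_Ioi).comp (measurable_id.sub_const b)
  · exact (this.indicator measurableSet_Iio).comp (measurable_id.add_const b)

theorem gaussianPDF_anti (v : NNReal) {s t : ℝ} (h : |s| ≤ |t|) :
    gaussianPDF 0 v t ≤ gaussianPDF 0 v s := by
  unfold gaussianPDF gaussianPDFReal
  have := sq_le_sq.2 h
  simp only [sub_zero]
  gcongr

theorem gaussianPDF_le_envelope {v b u t : ℝ} (h : |t - u| ≤ b) :
    gaussianPDF 0 v.toNNReal u ≤ envelope v b t := by
  obtain ⟨h1, h2⟩ := abs_le.1 h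
  unfold envelope
  rcases lt_or_ge b t with hbt | hbt
  · refine le_trans ?_ (le_add_left (le_add_right le_rfl))
    rw [Set.indicator_of_mem (by simpa using hbt)]
    apply gaussianPDF_anti
    rw [abs_of_pos (by linarith), abs_of_pos (by linarith)]; linarith
  rcases lt_or_ge t (-b) with hbt' | hbt'
  · refine le_trans ?_ (le_add_left (le_add_left le_rfl))
    rw [Set.indicator_of_mem (by simp; linarith)]
    apply gaussianPDF_anti
    rw [abs_of_neg (by linarith), abs_of_neg (by linarith)]; linarith
  · refine le_trans ?_ (le_add_right le_rfl)
    rw [Set.indicator_of_mem (Set.mem_Icc.2 ⟨hbt', hbt⟩)]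
    apply gaussianPDF_anti
    simp

theorem lintegral_envelope_le {v b : ℝ} (hv : 0 < v) (hb : 0 < b) :
    ∫⁻ t, envelope v b t ≤ ENNReal.ofReal (1 + 2 * b / √(2 * Real.pi * v)) := by
  have hv' : v.toNNReal ≠ 0 := by simpa using hv
  have hmeas := measurable_gaussianPDF 0 v.toNNReal
  have hright : Measurable fun t => (Set.Ioi 0).indicator (gaussianPDF 0 v.toNNReal) (t - b) :=
    (hmeas.indicator measurableSet_Ioi).comp (measurable_id.sub_const b)
  unfold envelope
  rw [lintegral_add_left (measurable_const.indicator measurableSet_Icc), lintegral_add_left hright,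
    lintegral_sub_right_eq_self (fun t => (Set.Ioi 0).indicator (gaussianPDF 0 v.toNNReal) t),
    lintegral_add_right_eq_self (fun t => (Set.Iio 0).indicator (gaussianPDF 0 v.toNNReal) t),
    lintegral_indicator measurableSet_Ioi, lintegral_indicator measurableSet_Iio,
    lintegral_indicator measurableSet_Icc, ← lintegral_union measurableSet_Iio
      (Set.disjoint_left.2 fun x hx hx' => lt_asymm (Set.mem_Ioi.1 hx) (Set.mem_Iio.1 hx'))]
  have h1 := (setLIntegral_le_lintegral (Set.Ioi 0 ∪ Set.Iio 0)
    (gaussianPDF 0 v.toNNReal)).trans_eq (lintegral_gaussianPDF_eq_one 0 hv')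
  refine (add_le_add_right h1 _).trans_eq ?_
  rw [lintegral_const, add_comm, ENNReal.ofReal_add (by positivity) (by positivity)]
  simp only [MeasurableSet.univ, Measure.restrict_apply, Set.univ_inter, Real.volume_Icc,
    ENNReal.ofReal_one, gaussianPDF, gaussianPDFReal]
  rw [← ENNReal.ofReal_mul (by positivity)]
  congr 2
  simp [hv.le]
  ring

theorem lintegral_prod_envelope_le {m : ℕ} {v b : ℝ} (hv : 0 < v) (hb : 0 < b) :
    ∫⁻ y : Fin m → ℝ, ∏ i, envelope v b (y i) ≤
      ENNReal.ofReal (Real.exp (2 * m * b / √(2 * Real.pi * v))) := by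
  rw [lintegral_pi_prod _ fun _ => measurable_envelope v b, prod_const, card_univ, Fintype.card_fin]
  refine (pow_le_pow_left' (lintegral_envelope_le hv hb) m).trans ?_
  rw [← ENNReal.ofReal_pow (by positivity)]
  apply ENNReal.ofReal_le_ofReal
  calc (1 + 2 * b / √(2 * Real.pi * v)) ^ m
      ≤ (Real.exp (2 * b / √(2 * Real.pi * v))) ^ m := by
        gcongr; rw [add_comm]; exact Real.add_one_le_exp _
    _ = _ := by rw [← Real.exp_nat_mul]; congr 1; ring

/-! ### Fourier analysis on the cube -/

/-- The character `χ_s(x) = (-1)^{p_s(x)}`. -/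
noncomputable def chi {n : ℕ} (s : Finset (Fin n)) (x : Fin n → Bool) : ℝ :=
  if parity s x then -1 else 1

theorem chi_eq_prod {n : ℕ} (s : Finset (Fin n)) (x : Fin n → Bool) :
    chi s x = ∏ i ∈ s, (if x i then (-1 : ℝ) else 1) := by
  rw [prod_ite, prod_const, prod_const_one, mul_one]
  unfold chi parity
  by_cases h : Odd (s.filter fun i => x i = true).card
  · simp [h, h.neg_one_pow]
  · simp [h, (Nat.not_odd_iff_even.1 h).neg_one_pow]

theorem sum_chi_mul_chi {n : ℕ} (x y : Fin n → Bool) :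
    ∑ s : Finset (Fin n), chi s x * chi s y = if x = y then (2 : ℝ) ^ n else 0 := by
  simp_rw [chi_eq_prod, ← prod_mul_distrib]
  rw [← powerset_univ, ← prod_one_add]
  split_ifs with h
  · subst h
    rw [prod_congr rfl (g := fun _ => (2 : ℝ))]
    · simp
    · intro i _; split_ifs <;> norm_num
  · obtain ⟨i, hi⟩ := Function.ne_iff.1 h
    refine prod_eq_zero (mem_univ i) ?_
    cases hx : x i <;> cases hy : y i <;> simp_all

theorem parseval {n : ℕ} (g : (Fin n → Bool) → ℝ) :
    ∑ s : Finset (Fin n), (∑ x, chi s x * g x) ^ 2 = 2 ^ n * ∑ x, g x ^ 2 := by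
  calc ∑ s : Finset (Fin n), (∑ x, chi s x * g x) ^ 2
      = ∑ s : Finset (Fin n), ∑ x, ∑ y, g x * g y * (chi s x * chi s y) := by
        refine sum_congr rfl fun s _ => ?_
        rw [sq, sum_mul_sum]
        exact sum_congr rfl fun x _ => sum_congr rfl fun y _ => by ring
    _ = ∑ x, ∑ y, g x * g y * ∑ s : Finset (Fin n), chi s x * chi s y := by
        rw [sum_comm]
        refine sum_congr rfl fun x _ => ?_
        rw [sum_comm]
        exact sum_congr rfl fun y _ => by rw [mul_sum]
    _ = _ := by
        simp_rw [sum_chi_mul_chi]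
        simp [mul_sum]
        exact sum_congr rfl fun x _ => by ring

/-- Cauchy–Schwarz over `s` followed by Parseval. -/
theorem sum_abs_fourier_le {n : ℕ} (g : (Fin n → Bool) → ℝ) (hg : ∀ x, |g x| ≤ 1 / 2) :
    ∑ s : Finset (Fin n), |∑ x, chi s x * g x| ≤ 2 ^ n * √(2 ^ n) / 2 := by
  have hg2 : ∑ x, g x ^ 2 ≤ 2 ^ n / 4 := by
    calc ∑ x, g x ^ 2 ≤ ∑ _x : Fin n → Bool, (1 / 4 : ℝ) := by
          refine sum_le_sum fun x _ => ?_
          have := abs_le.1 (hg x)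
          nlinarith
      _ = _ := by simp; ring
  have hcs := sq_sum_le_card_mul_sum_sq (s := (univ : Finset (Finset (Fin n))))
    (f := fun s => |∑ x, chi s x * g x|)
  simp only [sq_abs, parseval, card_univ, Fintype.card_finset, Fintype.card_fin] at hcs
  push_cast at hcs
  refine abs_le_of_sq_le_sq' (hcs.trans ?_) (by positivity) |>.2
  rw [div_pow, mul_pow, Real.sq_sqrt (by positivity)]
  calc (2 : ℝ) ^ n * (2 ^ n * ∑ x, g x ^ 2) ≤ 2 ^ n * (2 ^ n * (2 ^ n / 4)) := by gcongr
    _ = _ := by ring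

/-- Averaging over parities: if all component laws `P z` are dominated by one finite measure `Λ`,
their densities with respect to `Λ` lie in `[0, 1]`, so the halved differences `g x` of the densities
of `P (x, 0)` and `P (x, 1)` have modulus at most `1 / 2`, and `sum_abs_fourier_le` applies at every
point. Bounding the supremum in `l1Dist` by the integral of the absolute value loses a factor `2`,
which this `1 / 2` absorbs. -/
theorem sum_l1Dist_le {E : Type*} [MeasurableSpace E] {n : ℕ} (Λ : Measure E) [IsFiniteMeasure Λ]
    (P : (Fin n → Bool) × Bool → Measure E) (hP : ∀ z, P z ≤ Λ) :
    ((2 : ℝ) ^ n)⁻¹ * ∑ s : Finset (Fin n),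
        l1Dist (∑ z : (Fin n → Bool) × Bool, ((2 : ℝ≥0∞) ^ (n + 1))⁻¹ • P z)
          (∑ x : Fin n → Bool, ((2 : ℝ≥0∞) ^ n)⁻¹ • P (x, parity s x)) ≤
      (2 : ℝ) ^ (-(n : ℝ) / 2) * Λ.real Set.univ := by
  have hfin : ∀ z, IsFiniteMeasure (P z) := fun z => isFiniteMeasure_of_le Λ (hP z)
  have hac : ∀ z, P z ≪ Λ := fun z => Measure.absolutelyContinuous_of_le (hP z)
  let h : (Fin n → Bool) × Bool → E → ℝ := fun z w => ((P z).rnDeriv Λ w).toReal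
  have hint : ∀ z, Integrable (h z) Λ := fun z => Measure.integrable_toReal_rnDeriv
  let g : E → (Fin n → Bool) → ℝ := fun w x => (h (x, false) w - h (x, true) w) / 2
  have hgint : ∀ x, Integrable (fun w => g w x) Λ := fun x => ((hint _).sub (hint _)).div_const 2
  have hFint : ∀ s : Finset (Fin n), Integrable (fun w => ∑ x, chi s x * g w x) Λ := fun s =>
    integrable_finsetSum _ fun x _ => (hgint x).const_mul _
  have hg : ∀ᵐ w ∂Λ, ∀ x, |g w x| ≤ 1 / 2 := by
    have : ∀ᵐ w ∂Λ, ∀ z, (P z).rnDeriv Λ w ≤ 1 :=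
      ae_all_iff.2 fun z => Measure.rnDeriv_le_one_of_le (hP z)
    filter_upwards [this] with w hw x
    have h1 : ∀ z, 0 ≤ h z w ∧ h z w ≤ 1 := fun z =>
      ⟨ENNReal.toReal_nonneg, by simpa using ENNReal.toReal_mono ENNReal.one_ne_top (hw z)⟩
    have := h1 (x, false)
    have := h1 (x, true)
    simp only [g]
    rw [abs_le]; constructor <;> linarith
  have key : ∀ s : Finset (Fin n),
      l1Dist (∑ z : (Fin n → Bool) × Bool, ((2 : ℝ≥0∞) ^ (n + 1))⁻¹ • P z)
          (∑ x : Fin n → Bool, ((2 : ℝ≥0∞) ^ n)⁻¹ • P (x, parity s x)) ≤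
        2 * ((2 ^ n)⁻¹ * ∫ w, |∑ x, chi s x * g w x| ∂Λ) := by
    intro s
    unfold l1Dist
    gcongr
    refine ciSup_le fun ⟨A, hA⟩ => ?_
    have hPA : ∀ z, (P z A).toReal = ∫ w in A, h z w ∂Λ := fun z =>
      (Measure.setIntegral_toReal_rnDeriv (hac z) A).symm
    -- `P (x, b)` is the average over both labels plus `(-1)^b` times half the difference
    have hdiff : ((∑ z : (Fin n → Bool) × Bool, ((2 : ℝ≥0∞) ^ (n + 1))⁻¹ • P z) A).toReal -
        ((∑ x : Fin n → Bool, ((2 : ℝ≥0∞) ^ n)⁻¹ • P (x, parity s x)) A).toReal =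
        -((2 ^ n)⁻¹ * ∫ w in A, ∑ x, chi s x * g w x ∂Λ) := by
      rw [integral_finsetSum _ fun x _ => ((hgint x).const_mul _).integrableOn]
      simp only [Measure.coe_finsetSum, Finset.sum_apply, Measure.smul_apply, smul_eq_mul]
      rw [ENNReal.toReal_sum fun z _ => by finiteness, ENNReal.toReal_sum fun z _ => by finiteness]
      simp only [ENNReal.toReal_mul, ENNReal.toReal_inv, ENNReal.toReal_pow, ENNReal.toReal_ofNat]
      rw [Fintype.sum_prod_type, ← sum_sub_distrib, mul_sum, ← sum_neg_distrib]
      refine sum_congr rfl fun x _ => ?_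
      rw [integral_const_mul, integral_div, integral_sub (hint _).integrableOn (hint _).integrableOn,
        ← hPA, ← hPA, Fintype.sum_bool, pow_succ]
      unfold chi
      cases parity s x <;> simp <;> ring
    rw [hdiff, abs_neg, abs_mul, abs_of_pos (by positivity)]
    gcongr
    exact (abs_integral_le_integral_abs).trans
      (setIntegral_le_integral (hFint s).abs (.of_forall fun w => abs_nonneg _))
  have hsum : ∑ s : Finset (Fin n), ∫ w, |∑ x, chi s x * g w x| ∂Λ ≤
      2 ^ n * √(2 ^ n) / 2 * Λ.real Set.univ := by
    rw [← integral_finsetSum _ fun s _ => (hFint s).abs]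
    calc ∫ w, ∑ s : Finset (Fin n), |∑ x, chi s x * g w x| ∂Λ
        ≤ ∫ _w, 2 ^ n * √(2 ^ n) / 2 ∂Λ := by
          refine integral_mono_ae (integrable_finsetSum _ fun s _ => (hFint s).abs)
            (integrable_const _) ?_
          filter_upwards [hg] with w hw using sum_abs_fourier_le _ hw
      _ = _ := by rw [integral_const, smul_eq_mul, mul_comm]
  have hpow : (2 : ℝ) ^ (-(n : ℝ) / 2) = (2 ^ n)⁻¹ * √(2 ^ n) := by
    have h1 : √((2 : ℝ) ^ n) = 2 ^ ((n : ℝ) / 2) := by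
      rw [Real.sqrt_eq_rpow, ← Real.rpow_natCast, ← Real.rpow_mul (by norm_num)]; congr 1; ring
    rw [h1, ← Real.rpow_natCast, ← Real.rpow_neg (by norm_num), ← Real.rpow_add (by norm_num)]
    congr 1; ring
  calc _ ≤ ((2 : ℝ) ^ n)⁻¹ * ∑ s : Finset (Fin n),
        2 * ((2 ^ n)⁻¹ * ∫ w, |∑ x, chi s x * g w x| ∂Λ) := by
        gcongr with s _; exact key s
    _ = ((2 : ℝ) ^ n)⁻¹ * (2 * ((2 ^ n)⁻¹ *
        ∑ s : Finset (Fin n), ∫ w, |∑ x, chi s x * g w x| ∂Λ)) := by rw [← mul_sum, ← mul_sum]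
    _ ≤ ((2 : ℝ) ^ n)⁻¹ * (2 * ((2 ^ n)⁻¹ * (2 ^ n * √(2 ^ n) / 2 * Λ.real Set.univ))) := by gcongr
    _ = _ := by rw [hpow]; field_simp

/-! ### Perturbations of the Gaussian measure -/

section Perturbation

variable {m : ℕ} {B₁ : ℝ} {F : (Fin m → ℝ) → (Fin m → ℝ)}

theorem fderiv_apply_single (hF : Differentiable ℝ F) (w : Fin m → ℝ) (i j : Fin m) :
    fderiv ℝ F w (Pi.single j 1) i = fderiv ℝ (fun w' => F w' i) w (Pi.single j 1) := by
  rw [fderiv_apply (hF w) i]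
  rfl

theorem norm_fderiv_le (hB₁ : 0 ≤ B₁) (hF : Differentiable ℝ F)
    (hFd : ∀ w (i j : Fin m), |fderiv ℝ (fun w' => F w' i) w (Pi.single j 1)| ≤ B₁)
    (w : Fin m → ℝ) : ‖fderiv ℝ F w‖ ≤ m * B₁ := by
  refine ContinuousLinearMap.opNorm_le_bound _ (by positivity) fun u => ?_
  refine (pi_norm_le_iff_of_nonneg (by positivity)).2 fun i => ?_
  have hu : fderiv ℝ F w u i = ∑ j, u j * fderiv ℝ F w (Pi.single j 1) i := by
    conv_lhs => rw [pi_eq_sum_univ' u, map_sum]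
    simp [Finset.sum_apply]
  rw [hu]
  calc ‖∑ j, u j * fderiv ℝ F w (Pi.single j 1) i‖
      ≤ ∑ j, ‖u j * fderiv ℝ F w (Pi.single j 1) i‖ := norm_sum_le _ _
    _ ≤ ∑ _j : Fin m, ‖u‖ * B₁ := by
        refine sum_le_sum fun j _ => ?_
        rw [norm_mul, fderiv_apply_single hF]
        exact mul_le_mul (norm_le_pi_norm u j) (hFd w i j) (norm_nonneg _) (norm_nonneg _)
    _ = m * B₁ * ‖u‖ := by simp; ring

/-- `F` is a strict contraction for the sup norm, so `w ↦ w + F w` is injective. -/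
theorem injective_add (hB₁ : 0 ≤ B₁) (hmB₁ : m * B₁ < 1) (hF : Differentiable ℝ F)
    (hFd : ∀ w (i j : Fin m), |fderiv ℝ (fun w' => F w' i) w (Pi.single j 1)| ≤ B₁) :
    Function.Injective fun w => w + F w := by
  intro x y hxy
  have hl := convex_univ.norm_image_sub_le_of_norm_fderiv_le (𝕜 := ℝ) (fun x _ => hF x)
    (fun x _ => norm_fderiv_le hB₁ hF hFd x) (Set.mem_univ x) (Set.mem_univ y)
  have he : F y - F x = x - y := by
    have : x + F x = y + F y := hxy
    rw [sub_eq_sub_iff_add_eq_add, add_comm, this]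
  rw [he, norm_sub_rev] at hl
  have h0 : ‖y - x‖ = 0 := by nlinarith [norm_nonneg (y - x)]
  exact (sub_eq_zero.1 (norm_eq_zero.1 h0)).symm

theorem one_sub_le_abs_det (hB₁ : 0 ≤ B₁) (hmB₁ : m * B₁ < 1) (hF : Differentiable ℝ F)
    (hFd : ∀ w (i j : Fin m), |fderiv ℝ (fun w' => F w' i) w (Pi.single j 1)| ≤ B₁)
    (w : Fin m → ℝ) :
    1 - m * B₁ ≤ |(ContinuousLinearMap.id ℝ (Fin m → ℝ) + fderiv ℝ F w).det| := by
  refine le_trans ?_ (le_abs_self _)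
  have : (ContinuousLinearMap.id ℝ (Fin m → ℝ) + fderiv ℝ F w).det =
      (1 + LinearMap.toMatrix' (fderiv ℝ F w : (Fin m → ℝ) →ₗ[ℝ] (Fin m → ℝ))).det := by
    rw [ContinuousLinearMap.det, ← LinearMap.det_toMatrix']
    congr 1
    simp
  rw [this]
  refine one_sub_le_det m B₁ _ hB₁ hmB₁ fun i j => ?_
  rw [LinearMap.toMatrix'_apply]
  have := hFd w i j
  rw [← fderiv_apply_single hF] at this
  convert! this using 3

/-- The law of `W₀ + F(W₀)` is dominated by a measure that depends on `F` only through the bounds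
`B₀` and `B₁`. The density `φ(w)` at a preimage `w` of `y` is at most the product envelope at `y`, since
`|y i - w i| ≤ B₀`, and the Jacobian is at least `1 - m B₁`; the change of variables then needs only
injectivity of `w ↦ w + F w`. -/
theorem map_gaussPi_le {σ B₀ : ℝ} (hσ : 0 < σ) (hB₁ : 0 ≤ B₁) (hmB₁ : m * B₁ < 1)
    (hF : Differentiable ℝ F) (hFb : ∀ w i, |F w i| ≤ B₀)
    (hFd : ∀ w (i j : Fin m), |fderiv ℝ (fun w' => F w' i) w (Pi.single j 1)| ≤ B₁) :
    (gaussPi m 0 σ).map (fun w => w + F w) ≤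
      ENNReal.ofReal (1 - m * B₁)⁻¹ • volume.withDensity fun y => ∏ i, envelope σ B₀ (y i) := by
  have hT : Measurable fun w => w + F w := (continuous_id.add hF.continuous).measurable
  have hT' : ∀ w, HasFDerivAt (fun w => w + F w)
      (ContinuousLinearMap.id ℝ (Fin m → ℝ) + fderiv ℝ F w) w := fun w =>
    (hasFDerivAt_id w).add (hF w).hasFDerivAt
  have hpos : 0 < 1 - m * B₁ := by linarith
  refine Measure.le_iff.2 fun A hA => ?_
  set c := ENNReal.ofReal (1 - m * B₁)⁻¹ with hc
  have hTA := hT hA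
  rw [Measure.map_apply hT hA, gaussPi_eq_withDensity m hσ, withDensity_apply _ hTA,
    Measure.smul_apply, withDensity_apply _ hA, smul_eq_mul]
  set ψ : (Fin m → ℝ) → ℝ≥0∞ := fun y => ∏ i, envelope σ B₀ (y i)
  calc ∫⁻ w in (fun w => w + F w) ⁻¹' A, ∏ i, gaussianPDF 0 σ.toNNReal (w i)
      ≤ ∫⁻ w in (fun w => w + F w) ⁻¹' A, c * (ENNReal.ofReal
          |(ContinuousLinearMap.id ℝ (Fin m → ℝ) + fderiv ℝ F w).det| * ψ (w + F w)) := by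
        refine lintegral_mono fun w => ?_
        rw [← mul_assoc, hc, ← ENNReal.ofReal_mul (by positivity)]
        have h1 : (1 : ℝ≥0∞) ≤ ENNReal.ofReal ((1 - m * B₁)⁻¹ *
            |(ContinuousLinearMap.id ℝ (Fin m → ℝ) + fderiv ℝ F w).det|) := by
          rw [← ENNReal.ofReal_one]
          apply ENNReal.ofReal_le_ofReal
          rw [← div_eq_inv_mul, one_le_div hpos]
          exact one_sub_le_abs_det hB₁ hmB₁ hF hFd w
        refine le_trans ?_ (mul_le_mul_left h1 _)
        rw [one_mul]
        exact Finset.prod_le_prod' fun i _ => gaussianPDF_le_envelope (by simpa using hFb w i)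
    _ = c * ∫⁻ y in (fun w => w + F w) '' ((fun w => w + F w) ⁻¹' A), ψ y := by
        rw [lintegral_const_mul' _ _ ENNReal.ofReal_ne_top,
          lintegral_image_eq_lintegral_abs_det_fderiv_mul volume hTA
            (fun w _ => (hT' w).hasFDerivWithinAt)
            ((injective_add hB₁ hmB₁ hF hFd).injOn)]
    _ ≤ c * ∫⁻ y in A, ψ y := by
        gcongr
        exact Set.image_preimage_subset _ _

end Perturbation

theorem stmt13 (n m : ℕ) (hn : 0 < n) (hm : 0 < m) (σ B₀ B₁ : ℝ)
    (hσ : 0 < σ) (hB₀ : 0 < B₀) (hB₁ : 0 < B₁) (hmB₁ : (m : ℝ) < 1 / B₁)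
    (f : (Fin n → Bool) × Bool → (Fin m → ℝ) → (Fin m → ℝ))
    (hf : ∀ z, ContDiff ℝ 1 (f z))
    (hfb : ∀ z w i, |f z w i| ≤ B₀)
    (hfd : ∀ z w (i j : Fin m), |fderiv ℝ (fun w' => f z w' i) w (Pi.single j 1)| ≤ B₁) :
    -- 2^{−n} Σ_{s⊆[n]} ‖P⋆ − P⋆_s‖₁ ≤ 2^{−n/2}·e^{2mB₀/√(2πσ)}/(1 − mB₁),
    -- where P⋆ is the law of W₀ + f^{(Z)}(W₀), Z uniform on {0,1}^{n+1}, and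
    -- P⋆_s the law of W₀ + f^{(X,p_s(X))}(W₀), X uniform on {0,1}^n, W₀ ~ N(0, σ I_m).
    ((2 : ℝ) ^ n)⁻¹ * ∑ s : Finset (Fin n),
        l1Dist
          (∑ z : (Fin n → Bool) × Bool,
            ((2 : ℝ≥0∞) ^ (n + 1))⁻¹ • (gaussPi m 0 σ).map (fun w => w + f z w))
          (∑ x : Fin n → Bool,
            ((2 : ℝ≥0∞) ^ n)⁻¹ • (gaussPi m 0 σ).map (fun w => w + f (x, parity s x) w)) ≤
      (2 : ℝ) ^ (-(n : ℝ) / 2) *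
        Real.exp (2 * m * B₀ / Real.sqrt (2 * Real.pi * σ)) / (1 - m * B₁) := by
  have hmB : m * B₁ < 1 := (lt_div_iff₀ hB₁).1 hmB₁
  have hpos : 0 < 1 - m * B₁ := by linarith
  have hdiff : ∀ z, Differentiable ℝ (f z) := fun z => (hf z).differentiable one_ne_zero
  set Λ : Measure (Fin m → ℝ) := ENNReal.ofReal (1 - m * B₁)⁻¹ •
    volume.withDensity fun y => ∏ i, envelope σ B₀ (y i) with hΛ
  have hmass : Λ Set.univ ≤ ENNReal.ofReal
      ((1 - m * B₁)⁻¹ * Real.exp (2 * m * B₀ / √(2 * Real.pi * σ))) := by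
    rw [hΛ, Measure.smul_apply, withDensity_apply _ .univ, Measure.restrict_univ, smul_eq_mul,
      ENNReal.ofReal_mul (by positivity)]
    gcongr
    exact lintegral_prod_envelope_le hσ hB₀
  have : IsFiniteMeasure Λ := ⟨hmass.trans_lt ENNReal.ofReal_lt_top⟩
  have hreal : Λ.real Set.univ ≤
      (1 - m * B₁)⁻¹ * Real.exp (2 * m * B₀ / √(2 * Real.pi * σ)) :=
    ENNReal.toReal_le_of_le_ofReal (by positivity) hmass
  refine (sum_l1Dist_le Λ (fun z => (gaussPi m 0 σ).map (fun w => w + f z w)) fun z =>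
    map_gaussPi_le hσ hB₁.le hmB (hdiff z) (hfb z) (hfd z)).trans ?_
  calc _ ≤ (2 : ℝ) ^ (-(n : ℝ) / 2) *
        ((1 - m * B₁)⁻¹ * Real.exp (2 * m * B₀ / √(2 * Real.pi * σ))) := by gcongr
    _ = _ := by rw [div_eq_mul_inv]; ring
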